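/- arXiv:0909.1599 — 6 statements merged into one kernel-verified Lean document; each statement's English description precedes it below -/
import Mathlib

section
/- Let N be a positive integer, M = N+1, and let Φ = {φ_k}_{k=1}^{M} ⊂ ℝ^N be the real harmonic tight frame of M vectors in ℝ^N. Then every unit-norm tight frame Ψ = {ψ_k}_{k=1}^{M} of M vectors in ℝ^N can be written as ψ_k = δ(k) U φ_{σ(k)} for k = 1,2,...,M, where δ(k) = ±1 is some sign function in k, U is some orthogonal N×N matrix, and σ is some permutation on the index set {1,2,...,M}. -/
/-- The real harmonic tight frame of `M` vectors in `ℝ^N` (0-based indexing: `htf N M k`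
is the vector `φ_{k+1}` of the paper, for `k = 0, …, M-1`). -/
noncomputable def htf (N M : ℕ) (k : Fin M) (i : Fin N) : ℝ :=
  if N % 2 = 0 then
    if (i : ℕ) < N / 2 then
      Real.sqrt (2 / N) * Real.cos (((2 * (i : ℕ) + 1 : ℕ) : ℝ) * (k : ℕ) * Real.pi / M)
    else
      Real.sqrt (2 / N) *
        Real.sin (((2 * ((i : ℕ) - N / 2) + 1 : ℕ) : ℝ) * (k : ℕ) * Real.pi / M)
  else
    if (i : ℕ) = 0 then Real.sqrt (2 / N) * (1 / Real.sqrt 2)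
    else if (i : ℕ) ≤ (N - 1) / 2 then
      Real.sqrt (2 / N) * Real.cos (((2 * (i : ℕ) : ℕ) : ℝ) * (k : ℕ) * Real.pi / M)
    else
      Real.sqrt (2 / N) *
        Real.sin (((2 * ((i : ℕ) - (N - 1) / 2) : ℕ) : ℝ) * (k : ℕ) * Real.pi / M)

/-!
Complete the suitably scaled analysis matrix of a unit-norm tight frame of `N + 1` vectors in `ℝ^N`
by one column `w` to an orthogonal matrix. Orthonormality of the rows says that the Gram matrix `G`
satisfies `N G = (N + 1) I - (N + 1) w wᵀ`, and since the vectors have unit norm, all entries of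
`√(N + 1) w` are signs. So the Gram matrix is unique up to conjugation by a diagonal sign matrix,
and two tight frames with the same Gram matrix differ by an orthogonal transformation.

The inner products of the harmonic frame are values of a Chebyshev polynomial of the second kind,
`N ⟪φ_k, φ_l⟫ = U_{N-1} (cos θ) = sin (N θ) / sin θ` with `θ = (k - l) π / M`. For `M = N + 1` this
is `-(-1)^(k - l)` off the diagonal, so here the signs are `(-1)^k`.
-/

open Matrix Polynomial.Chebyshev Real

section MatrixLemmas

variable {ι κ : Type*} [Fintype ι] [Fintype κ]

theorem exists_dotProduct_self_eq_one_and_vecMul_eq_zero (A : Matrix κ ι ℝ)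
    (hcard : Fintype.card ι < Fintype.card κ) : ∃ w : κ → ℝ, w ⬝ᵥ w = 1 ∧ w ᵥ* A = 0 := by
  have hker : A.vecMulLinear.ker ≠ ⊥ := LinearMap.ker_ne_bot_of_finrank_lt (by simpa using hcard)
  obtain ⟨v, hvA, hv⟩ := Submodule.exists_mem_ne_zero_of_ne_bot hker
  have hvv : 0 < v ⬝ᵥ v := by simpa using dotProduct_star_self_pos_iff.2 hv
  refine ⟨(√(v ⬝ᵥ v))⁻¹ • v, ?_, ?_⟩
  · rw [smul_dotProduct, dotProduct_smul, smul_smul, ← mul_inv, mul_self_sqrt hvv.le, smul_eq_mul,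
      inv_mul_cancel₀ hvv.ne']
  · rw [smul_vecMul, show v ᵥ* A = 0 from hvA, smul_zero]

theorem exists_mul_transpose_add_vecMulVec_eq_one [DecidableEq ι] [DecidableEq κ]
    {A : Matrix κ ι ℝ} (hcard : Fintype.card κ = Fintype.card ι + 1) (hA : Aᵀ * A = 1) :
    ∃ w : κ → ℝ, A * Aᵀ + vecMulVec w w = 1 := by
  obtain ⟨w, hww, hwA⟩ := exists_dotProduct_self_eq_one_and_vecMul_eq_zero A (by lia)
  refine ⟨w, ?_⟩
  let B : Matrix κ (ι ⊕ Unit) ℝ := fromCols A (replicateCol Unit w)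
  have hB : Bᵀ * B = 1 := by
    have hAw : Aᵀ * replicateCol Unit w = 0 := by
      rw [← replicateCol_mulVec, mulVec_transpose, hwA, replicateCol_zero]
    have hwA' : replicateRow Unit w * A = 0 := by rw [← replicateRow_vecMul, hwA, replicateRow_zero]
    have hww' : replicateRow Unit w * replicateCol Unit w = 1 := by
      ext; simp [hww]
    rw [transpose_fromCols, fromRows_mul_fromCols, transpose_replicateCol, hA, hAw, hwA', hww',
      fromBlocks_one]
  have hB' : B * Bᵀ = 1 := (mul_eq_one_comm_of_card_eq _ _ _ (by simp [hcard])).1 hB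
  rwa [transpose_fromCols, fromCols_mul_fromRows, transpose_replicateCol, ← vecMulVec_eq] at hB'

theorem exists_eq_mul_transpose_of_mul_transpose_eq [DecidableEq ι] {K : Type*} [Field K]
    {A B : Matrix κ ι K} {c : K} (hc : c ≠ 0) (hA : Aᵀ * A = c • 1) (hAB : A * Aᵀ = B * Bᵀ) :
    ∃ U : Matrix ι ι K, Uᵀ * U = 1 ∧ A = B * Uᵀ := by
  let U : Matrix ι ι K := c⁻¹ • (Aᵀ * B)
  have hU : Uᵀ = c⁻¹ • (Bᵀ * A) := by simp [U, transpose_mul]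
  have hBU : A = B * Uᵀ := by
    rw [hU, Matrix.mul_smul, ← Matrix.mul_assoc, ← hAB, Matrix.mul_assoc, hA, Matrix.mul_smul,
      smul_smul, inv_mul_cancel₀ hc, one_smul, Matrix.mul_one]
  have hUU : U * Uᵀ = 1 := by
    rw [Matrix.smul_mul, Matrix.mul_assoc, ← hBU, hA, smul_smul, inv_mul_cancel₀ hc, one_smul]
  exact ⟨U, mul_eq_one_comm.1 hUU, hBU⟩

theorem diagonal_mul_vecMulVec_mul_diagonal {R : Type*} [CommSemiring R] [DecidableEq κ]
    (d v w : κ → R) :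
    diagonal d * vecMulVec v w * diagonal d = vecMulVec (d * v) (d * w) := by
  ext k l
  simp only [mul_diagonal, diagonal_mul, vecMulVec_apply, Pi.mul_apply]
  ring

end MatrixLemmas

/-- The rows of `F` form a unit-norm tight frame, that is, `F` is the analysis operator of a
unit-norm tight frame of `card κ` vectors in `ℝ^ι`. -/
structure IsUnitNormTightFrame {ι κ : Type*} [Fintype ι] [Fintype κ] [DecidableEq ι]
    (F : Matrix κ ι ℝ) : Prop where
  row_dotProduct_self : ∀ k, F k ⬝ᵥ F k = 1
  transpose_mul_self : Fᵀ * F = (Fintype.card κ / Fintype.card ι : ℝ) • 1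

namespace IsUnitNormTightFrame

variable {ι κ : Type*} [Fintype ι] [Fintype κ] [DecidableEq ι] {F : Matrix κ ι ℝ}

theorem card_ne_zero [Nonempty κ] (hF : IsUnitNormTightFrame F) : Fintype.card ι ≠ 0 := by
  intro h
  have : IsEmpty ι := Fintype.card_eq_zero_iff.1 h
  simpa using hF.row_dotProduct_self (Classical.arbitrary κ)

variable [DecidableEq κ]

theorem exists_sign_gram (hF : IsUnitNormTightFrame F)
    (hcard : Fintype.card κ = Fintype.card ι + 1) :
    ∃ ε : κ → ℝ, ε * ε = 1 ∧
      (Fintype.card ι : ℝ) • (F * Fᵀ) = (Fintype.card κ : ℝ) • 1 - vecMulVec ε ε := by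
  have : Nonempty κ := Fintype.card_pos_iff.1 (by lia)
  have hn : (Fintype.card ι : ℝ) ≠ 0 := Nat.cast_ne_zero.2 hF.card_ne_zero
  have hm : (Fintype.card κ : ℝ) = Fintype.card ι + 1 := by exact_mod_cast hcard
  set n := (Fintype.card ι : ℝ)
  set m := (Fintype.card κ : ℝ)
  have hn0 : 0 ≤ n := Nat.cast_nonneg _
  have hm0 : 0 < m := by linarith
  have hscale : √(n / m) * √(n / m) = n / m := mul_self_sqrt (by positivity)
  have hA : (√(n / m) • F)ᵀ * (√(n / m) • F) = 1 := by
    rw [transpose_smul, Matrix.smul_mul, Matrix.mul_smul, smul_smul, hscale, hF.transpose_mul_self,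
      smul_smul, div_mul_div_cancel₀ hm0.ne', div_self hn, one_smul]
  obtain ⟨w, hw⟩ := exists_mul_transpose_add_vecMulVec_eq_one hcard hA
  have hgram : n • (F * Fᵀ) = m • 1 - vecMulVec (√m • w) (√m • w) := by
    rw [transpose_smul, Matrix.smul_mul, Matrix.mul_smul, smul_smul, hscale] at hw
    rw [smul_vecMulVec, vecMulVec_smul, smul_smul, mul_self_sqrt hm0.le, ← hw, smul_add, smul_smul,
      mul_div_cancel₀ _ hm0.ne', add_sub_cancel_right]
  refine ⟨√m • w, funext fun k => ?_, hgram⟩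
  have hunit : (F * Fᵀ) k k = 1 := hF.row_dotProduct_self k
  have hdiag : n * (F * Fᵀ) k k = m - (√m • w) k * (√m • w) k := by
    simpa [-smul_vecMulVec, -vecMulVec_smul, vecMulVec_apply] using congr_fun₂ hgram k k
  rw [hunit] at hdiag
  rw [Pi.mul_apply, Pi.one_apply]
  linarith

theorem exists_eq_diagonal_mul_mul_transpose (hF : IsUnitNormTightFrame F)
    (hcard : Fintype.card κ = Fintype.card ι + 1) {G : Matrix κ ι ℝ} {η : κ → ℝ} (hη : η * η = 1)
    (hG : (Fintype.card ι : ℝ) • (G * Gᵀ) = (Fintype.card κ : ℝ) • 1 - vecMulVec η η) :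
    ∃ (δ : κ → ℝ) (U : Matrix ι ι ℝ), δ * δ = 1 ∧ Uᵀ * U = 1 ∧ F = diagonal δ * G * Uᵀ := by
  have : Nonempty κ := Fintype.card_pos_iff.1 (by lia)
  have hn : (Fintype.card ι : ℝ) ≠ 0 := Nat.cast_ne_zero.2 hF.card_ne_zero
  have hm : (Fintype.card κ : ℝ) ≠ 0 := Nat.cast_ne_zero.2 Fintype.card_ne_zero
  obtain ⟨ε, hε, hgram⟩ := hF.exists_sign_gram hcard
  have hδ : (ε * η) * (ε * η) = 1 := by rw [mul_mul_mul_comm, hε, hη, one_mul]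
  have hdiagonal : diagonal (ε * η) * diagonal (ε * η) = 1 := by
    rw [diagonal_mul_diagonal', ← Pi.mul_def, hδ, Pi.one_def, diagonal_one]
  have hδη : ε * η * η = ε := by rw [mul_assoc, hη, mul_one]
  have hFG : F * Fᵀ = diagonal (ε * η) * G * (diagonal (ε * η) * G)ᵀ := by
    apply smul_right_injective _ hn
    dsimp only
    have hconj : diagonal (ε * η) * G * (diagonal (ε * η) * G)ᵀ =
        diagonal (ε * η) * (G * Gᵀ) * diagonal (ε * η) := by
      rw [transpose_mul, diagonal_transpose]
      simp only [Matrix.mul_assoc]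
    rw [hgram, hconj, ← Matrix.smul_mul, ← Matrix.mul_smul, hG, Matrix.mul_sub, Matrix.sub_mul,
      diagonal_mul_vecMulVec_mul_diagonal, hδη, Matrix.mul_smul, Matrix.smul_mul, Matrix.mul_one,
      hdiagonal]
  obtain ⟨U, hU, hFU⟩ :=
    exists_eq_mul_transpose_of_mul_transpose_eq (div_ne_zero hm hn) hF.transpose_mul_self hFG
  exact ⟨ε * η, U, hδ, hU, hFU⟩

end IsUnitNormTightFrame

section Chebyshev

variable (R : Type*) [CommRing R]

theorem chebyshev_U_two_mul_sub_one_eq_sum (n : ℕ) :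
    U R (2 * n - 1) = ∑ i : Fin n, 2 * T R (2 * (i : ℕ) + 1) := by
  induction n with
  | zero => simp
  | succ n ih =>
    rw [Fin.sum_univ_castSucc]
    simp only [Fin.val_castSucc, Fin.val_last]
    linear_combination (norm := (push_cast; ring_nf)) U_eq_two_mul_T_add_U R (2 * n - 1) + ih

theorem chebyshev_U_two_mul_eq_one_add_sum (n : ℕ) :
    U R (2 * n) = 1 + ∑ i : Fin n, 2 * T R (2 * ((i : ℕ) + 1)) := by
  induction n with
  | zero => simp
  | succ n ih =>
    rw [Fin.sum_univ_castSucc]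
    simp only [Fin.val_castSucc, Fin.val_last]
    linear_combination (norm := (push_cast; ring_nf)) U_eq_two_mul_T_add_U R (2 * n) + ih

end Chebyshev

section HarmonicFrame

variable {n M : ℕ} (k l : Fin M)

theorem htf_even_castAdd (i : Fin n) :
    htf (n + n) M k (Fin.castAdd n i) = √(2 / (n + n)) * cos ((2 * i + 1) * (k * π / M)) := by
  simp [htf, mul_div_assoc, mul_assoc, ← two_mul]

theorem htf_even_natAdd (i : Fin n) :
    htf (n + n) M k (Fin.natAdd n i) = √(2 / (n + n)) * sin ((2 * i + 1) * (k * π / M)) := by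
  simp [htf, mul_div_assoc, mul_assoc, ← two_mul]

theorem htf_odd_zero : htf (n + n + 1) M k 0 = √(2 / (n + n + 1)) * (1 / √2) := by
  simp [htf, ← two_mul]

theorem htf_odd_succ_castAdd (i : Fin n) :
    htf (n + n + 1) M k (Fin.castAdd n i).succ =
      √(2 / (n + n + 1)) * cos (2 * (i + 1) * (k * π / M)) := by
  simp [htf, mul_div_assoc, mul_assoc, ← two_mul]

theorem htf_odd_succ_natAdd (i : Fin n) :
    htf (n + n + 1) M k (Fin.natAdd n i).succ =
      √(2 / (n + n + 1)) * sin (2 * (i + 1) * (k * π / M)) := by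
  simp [htf, mul_div_assoc, mul_assoc, ← two_mul, add_assoc, add_comm]

theorem htf_dotProduct_even :
    ((n + n : ℕ) : ℝ) * (htf (n + n) M k ⬝ᵥ htf (n + n) M l) =
      ∑ i : Fin n, 2 * cos ((2 * i + 1) * ((k - l) * π / M)) := by
  simp only [dotProduct, Fin.sum_univ_add, htf_even_castAdd, htf_even_natAdd]
  rw [← Finset.sum_add_distrib, Finset.mul_sum]
  refine Finset.sum_congr rfl fun i _ => ?_
  have hn : 0 < (n : ℝ) := Nat.cast_pos.2 i.pos
  have hscale : (n + n : ℝ) * √(2 / (n + n)) ^ 2 = 2 := by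
    rw [sq_sqrt (by positivity)]
    field_simp
  rw [sub_mul, sub_div, mul_sub, cos_sub]
  push_cast
  linear_combination
    (cos ((2 * i + 1) * (k * π / M)) * cos ((2 * i + 1) * (l * π / M)) +
      sin ((2 * i + 1) * (k * π / M)) * sin ((2 * i + 1) * (l * π / M))) * hscale

theorem htf_dotProduct_odd :
    ((n + n + 1 : ℕ) : ℝ) * (htf (n + n + 1) M k ⬝ᵥ htf (n + n + 1) M l) =
      1 + ∑ i : Fin n, 2 * cos (2 * (i + 1) * ((k - l) * π / M)) := by
  have hscale : (n + n + 1 : ℝ) * √(2 / (n + n + 1)) ^ 2 = 2 := by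
    rw [sq_sqrt (by positivity)]
    field_simp
  have hconst : (1 / √2) ^ 2 = 1 / 2 := by rw [div_pow, one_pow, sq_sqrt zero_le_two]
  simp only [dotProduct, Fin.sum_univ_succ (n := n + n), Fin.sum_univ_add, htf_odd_zero,
    htf_odd_succ_castAdd, htf_odd_succ_natAdd]
  rw [← Finset.sum_add_distrib, mul_add, Finset.mul_sum]
  push_cast
  congr 1
  · linear_combination (1 / √2) ^ 2 * hscale + 2 * hconst
  refine Finset.sum_congr rfl fun i _ => ?_
  rw [sub_mul, sub_div, mul_sub, cos_sub]
  linear_combination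
    (cos (2 * (i + 1) * (k * π / M)) * cos (2 * (i + 1) * (l * π / M)) +
      sin (2 * (i + 1) * (k * π / M)) * sin (2 * (i + 1) * (l * π / M))) * hscale

theorem htf_dotProduct_eq_eval_chebyshev_U (N : ℕ) :
    (N : ℝ) * (htf N M k ⬝ᵥ htf N M l) = (U ℝ (N - 1)).eval (cos ((k - l) * π / M)) := by
  rcases N.even_or_odd' with ⟨n, rfl | rfl⟩
  · rw [two_mul, htf_dotProduct_even, ← two_mul, Nat.cast_mul, Nat.cast_two,
      chebyshev_U_two_mul_sub_one_eq_sum]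
    simp [Polynomial.eval_finsetSum]
  · rw [two_mul, htf_dotProduct_odd, ← two_mul, Nat.cast_succ, Nat.cast_mul, Nat.cast_two,
      add_sub_cancel_right, chebyshev_U_two_mul_eq_one_add_sum]
    simp [Polynomial.eval_finsetSum]

end HarmonicFrame

theorem sin_sub_mul_pi_div_ne_zero {M : ℕ} {k l : Fin M} (hkl : k ≠ l) :
    sin ((k - l) * π / M) ≠ 0 := by
  have hM : (M : ℝ) ≠ 0 := Nat.cast_ne_zero.2 k.pos.ne'
  rw [Ne, sin_eq_zero_iff]
  rintro ⟨m, hm⟩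
  have hmul : (m * M : ℝ) = k - l := by
    field_simp at hm
    exact hm
  have hdvd : (M : ℤ) ∣ k - l := ⟨m, by rw [mul_comm]; exact_mod_cast hmul.symm⟩
  have hsub : (k - l : ℤ) = 0 := Int.eq_zero_of_abs_lt_dvd hdvd (by grind)
  exact hkl (Fin.ext (by lia))

theorem sin_mul_sub_mul_pi_div_succ (N k l : ℕ) :
    sin (N * ((k - l) * π / (N + 1 : ℕ))) =
      -((-1) ^ k * (-1) ^ l * sin ((k - l) * π / (N + 1 : ℕ))) := by
  have hangle : N * ((k - l) * π / (N + 1 : ℕ)) =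
      (k * π - l * π) - (k - l) * π / (N + 1 : ℕ) := by
    push_cast
    field_simp
    ring
  rw [hangle, sin_sub, sin_sub, cos_sub]
  simp only [sin_nat_mul_pi, cos_nat_mul_pi]
  ring

theorem eval_chebyshev_U_cos_sub_mul_pi_div_succ {N : ℕ} {k l : Fin (N + 1)} (hkl : k ≠ l) :
    (U ℝ (N - 1)).eval (cos ((k - l) * π / (N + 1 : ℕ))) = -((-1) ^ (k : ℕ) * (-1) ^ (l : ℕ)) := by
  apply mul_right_cancel₀ (sin_sub_mul_pi_div_ne_zero hkl)
  rw [U_real_cos, ← neg_mul_eq_neg_mul, ← sin_mul_sub_mul_pi_div_succ]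
  push_cast
  ring_nf

/-- The signs `(-1)^k`, with `k` starting at `0`. Multiplying the harmonic tight frame of `N + 1`
vectors in `ℝ^N` by them gives the vertices of a regular simplex. -/
def alternatingSign (m : ℕ) (k : Fin m) : ℝ := (-1) ^ (k : ℕ)

theorem alternatingSign_mul_self (m : ℕ) : alternatingSign m * alternatingSign m = 1 := by
  ext k
  simp [alternatingSign, ← mul_pow]

theorem htf_succ_gram (N : ℕ) :
    (N : ℝ) • (of (htf N (N + 1)) * (of (htf N (N + 1)))ᵀ) =
      ((N + 1 : ℕ) : ℝ) • (1 : Matrix (Fin (N + 1)) (Fin (N + 1)) ℝ) -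
        vecMulVec (alternatingSign (N + 1)) (alternatingSign (N + 1)) := by
  ext k l
  change (N : ℝ) * (htf N (N + 1) k ⬝ᵥ htf N (N + 1) l) = _
  rw [htf_dotProduct_eq_eval_chebyshev_U]
  rcases eq_or_ne k l with rfl | hkl
  · simp [vecMulVec_apply, alternatingSign, ← mul_pow]
  · rw [eval_chebyshev_U_cos_sub_mul_pi_div_succ hkl]
    simp [vecMulVec_apply, alternatingSign, hkl]

/-- Let `M = N + 1` and let `htf N M` be the real harmonic tight frame of `M` vectors in
`ℝ^N`.  Every unit-norm tight frame `Ψ = {ψ_k}` of `M` vectors in `ℝ^N` can be written as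
`ψ_k = δ(k) U φ_{σ(k)}` for a sign function `δ`, an orthogonal matrix `U`, and a
permutation `σ` of the index set. -/
theorem stmt0 {N : ℕ} (hN : 1 ≤ N) (M : ℕ) (hM : M = N + 1)
    (Ψ : Fin M → Fin N → ℝ)
    (hnorm : ∀ k : Fin M, ∑ i : Fin N, Ψ k i ^ 2 = 1)
    (htight : ∀ i j : Fin N,
      ∑ k : Fin M, Ψ k i * Ψ k j = ((M : ℝ) / N) * (if i = j then 1 else 0)) :
    ∃ (δ : Fin M → ℝ) (U : Matrix (Fin N) (Fin N) ℝ) (σ : Equiv.Perm (Fin M)),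
      (∀ k, δ k = 1 ∨ δ k = -1) ∧
      U.transpose * U = 1 ∧
      (∀ (k : Fin M) (i : Fin N), Ψ k i = δ k * ∑ j : Fin N, U i j * htf N M (σ k) j) := by
  subst hM
  have hframe : IsUnitNormTightFrame (of Ψ) := by
    refine ⟨fun k => by simpa [dotProduct, sq] using hnorm k, ?_⟩
    ext i j
    simpa [mul_apply, one_apply] using htight i j
  obtain ⟨δ, U, hδ, hU, hΨ⟩ := hframe.exists_eq_diagonal_mul_mul_transpose (by simp)
    (alternatingSign_mul_self _) (by simpa using htf_succ_gram N)
  refine ⟨δ, U, Equiv.refl _, fun k => mul_self_eq_one_iff.1 (congr_fun hδ k), hU, fun k i => ?_⟩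
  calc Ψ k i = (diagonal δ * of (htf N (N + 1)) * Uᵀ) k i := congr_fun₂ hΨ k i
    _ = δ k * ∑ j, U i j * htf N (N + 1) k j := by
      rw [Matrix.mul_assoc, diagonal_mul]
      simp [mul_apply, mul_comm]
end

section
/- Let N ≥ 1 and M = N+1, and let {ψ_k}_{k=1}^M be a modulated harmonic tight frame of M vectors in ℝ^N. Then {ψ_k} is a zero-sum frame; that is, for each coordinate ℓ ∈ {1,...,N}, the sum over k = 1,...,M of the ℓ-th component of ψ_k equals zero (equivalently, each column of the analysis frame operator F sums to zero). -/
/-!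
Modulation by `(-1)^k` shifts the frequency `a` of a column of the frame to `a + M`. The
frequencies occurring in dimension `N` satisfy `a < N` and have the parity of `N - 1`, so if
`N ≤ M` and `N + M` is odd then `a + M = 2 * j` with `M ∤ j`. The modulated column is thus the real
or imaginary part of a nontrivial character `k ↦ exp (2 * π * I / M) ^ (j * k)` of `ℤ/M`, whose sum
vanishes.
-/

theorem geom_sum_pow_eq_zero_of_isPrimitiveRoot {R : Type*} [CommRing R] [IsDomain R] {ζ : R}
    {n j : ℕ} (hζ : IsPrimitiveRoot ζ n) (hj : ¬ n ∣ j) :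
    ∑ k ∈ Finset.range n, (ζ ^ j) ^ k = 0 := by
  have hne : ζ ^ j - 1 ≠ 0 := sub_ne_zero.mpr (mt (hζ.pow_eq_one_iff_dvd j).mp hj)
  refine (mul_eq_zero.mp ?_).resolve_right hne
  rw [geom_sum_mul, pow_right_comm, hζ.pow_eq_one, one_pow, sub_self]

theorem neg_one_pow_mul_cexp_eq_pow {a M j : ℕ} (hM : M ≠ 0) (haj : a + M = 2 * j) (k : ℕ) :
    (-1 : ℂ) ^ k * Complex.exp ((a * k * Real.pi / M : ℝ) * Complex.I) =
      (Complex.exp (2 * Real.pi * Complex.I / M) ^ j) ^ k := by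
  have hM' : (M : ℂ) ≠ 0 := Nat.cast_ne_zero.mpr hM
  have haj' : (a : ℂ) = 2 * j - M := eq_sub_of_add_eq (mod_cast haj)
  have hphase : (k : ℂ) * (j * (2 * Real.pi * Complex.I / M)) =
      k * (Real.pi * Complex.I) + (a * k * Real.pi / M : ℝ) * Complex.I := by
    push_cast
    rw [haj']
    field_simp
    ring
  rw [← Complex.exp_nat_mul, ← Complex.exp_nat_mul, hphase, Complex.exp_add,
    Complex.exp_nat_mul _ k, Complex.exp_pi_mul_I]

theorem sum_neg_one_pow_mul_cexp_eq_zero {a M : ℕ} (heven : Even (a + M))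
    (hdvd : ¬ 2 * M ∣ a + M) :
    ∑ k ∈ Finset.range M,
      (-1 : ℂ) ^ k * Complex.exp ((a * k * Real.pi / M : ℝ) * Complex.I) = 0 := by
  obtain rfl | hM := eq_or_ne M 0
  · exact Finset.sum_range_zero _
  obtain ⟨j, haj⟩ := heven.two_dvd
  have hj : ¬ M ∣ j := fun h ↦ hdvd (haj ▸ mul_dvd_mul_left 2 h)
  simp_rw [neg_one_pow_mul_cexp_eq_pow hM haj]
  exact geom_sum_pow_eq_zero_of_isPrimitiveRoot (Complex.isPrimitiveRoot_exp M hM) hj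

theorem sum_neg_one_pow_mul_cos_eq_zero {a M : ℕ} (heven : Even (a + M))
    (hdvd : ¬ 2 * M ∣ a + M) :
    ∑ k ∈ Finset.range M, (-1 : ℝ) ^ k * Real.cos (a * k * Real.pi / M) = 0 := by
  calc ∑ k ∈ Finset.range M, (-1 : ℝ) ^ k * Real.cos (a * k * Real.pi / M)
    _ = (∑ k ∈ Finset.range M,
          (-1 : ℂ) ^ k * Complex.exp ((a * k * Real.pi / M : ℝ) * Complex.I)).re := by
      rw [Complex.re_sum]
      refine Finset.sum_congr rfl fun k _ ↦ ?_
      rw [← Complex.exp_ofReal_mul_I_re, ← Complex.re_ofReal_mul, Complex.ofReal_pow,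
        Complex.ofReal_neg, Complex.ofReal_one]
    _ = 0 := by rw [sum_neg_one_pow_mul_cexp_eq_zero heven hdvd, Complex.zero_re]

theorem sum_neg_one_pow_mul_sin_eq_zero {a M : ℕ} (heven : Even (a + M))
    (hdvd : ¬ 2 * M ∣ a + M) :
    ∑ k ∈ Finset.range M, (-1 : ℝ) ^ k * Real.sin (a * k * Real.pi / M) = 0 := by
  calc ∑ k ∈ Finset.range M, (-1 : ℝ) ^ k * Real.sin (a * k * Real.pi / M)
    _ = (∑ k ∈ Finset.range M,
          (-1 : ℂ) ^ k * Complex.exp ((a * k * Real.pi / M : ℝ) * Complex.I)).im := by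
      rw [Complex.im_sum]
      refine Finset.sum_congr rfl fun k _ ↦ ?_
      rw [← Complex.exp_ofReal_mul_I_im, ← Complex.im_ofReal_mul, Complex.ofReal_pow,
        Complex.ofReal_neg, Complex.ofReal_one]
    _ = 0 := by rw [sum_neg_one_pow_mul_cexp_eq_zero heven hdvd, Complex.zero_im]

theorem exists_htf_eq_mul_cos_or_sin {N : ℕ} (M : ℕ) (i : Fin N) :
    ∃ (a : ℕ) (c : ℝ), a < N ∧ Odd (a + N) ∧
      ((∀ k : Fin M, htf N M k i = c * Real.cos (a * (k : ℕ) * Real.pi / M)) ∨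
        ∀ k : Fin M, htf N M k i = c * Real.sin (a * (k : ℕ) * Real.pi / M)) := by
  have hi := i.isLt
  unfold htf
  split_ifs with hN hcos hzero hcos
  · exact ⟨2 * i + 1, _, by omega, by grind, .inl fun _ ↦ rfl⟩
  · exact ⟨2 * (i - N / 2) + 1, _, by omega, by grind, .inr fun _ ↦ rfl⟩
  · exact ⟨0, √(2 / N) * (1 / √2), by omega, by grind, .inl fun _ ↦ by simp⟩
  · exact ⟨2 * i, _, by omega, by grind, .inl fun _ ↦ rfl⟩
  · exact ⟨2 * (i - (N - 1) / 2), _, by omega, by grind, .inr fun _ ↦ rfl⟩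

theorem sum_neg_one_pow_mul_htf_eq_zero {N M : ℕ} (hNM : N ≤ M) (hodd : Odd (N + M))
    (i : Fin N) : ∑ k : Fin M, (-1 : ℝ) ^ (k : ℕ) * htf N M k i = 0 := by
  obtain ⟨a, c, haN, haodd, hcol⟩ := exists_htf_eq_mul_cos_or_sin M i
  have heven : Even (a + M) := by grind
  have hdvd : ¬ 2 * M ∣ a + M := Nat.not_dvd_of_pos_of_lt (by omega) (by omega)
  obtain hcos | hsin := hcol
  · simp_rw [hcos, mul_left_comm _ c, ← Finset.mul_sum]
    rw [← Finset.sum_range (fun k ↦ (-1 : ℝ) ^ k * Real.cos (a * k * Real.pi / M)),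
      sum_neg_one_pow_mul_cos_eq_zero heven hdvd, mul_zero]
  · simp_rw [hsin, mul_left_comm _ c, ← Finset.mul_sum]
    rw [← Finset.sum_range (fun k ↦ (-1 : ℝ) ^ k * Real.sin (a * k * Real.pi / M)),
      sum_neg_one_pow_mul_sin_eq_zero heven hdvd, mul_zero]

theorem stmt2_general {N M : ℕ} (hNM : N ≤ M) (hodd : Odd (N + M)) (γ : ℝ) (i : Fin N) :
    ∑ k : Fin M, γ * (-1 : ℝ) ^ ((k : ℕ) + 1) * htf N M k i = 0 := by
  calc ∑ k : Fin M, γ * (-1 : ℝ) ^ ((k : ℕ) + 1) * htf N M k i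
    _ = -γ * ∑ k : Fin M, (-1 : ℝ) ^ (k : ℕ) * htf N M k i := by
      rw [Finset.mul_sum]
      exact Finset.sum_congr rfl fun k _ ↦ by ring
    _ = 0 := by rw [sum_neg_one_pow_mul_htf_eq_zero hNM hodd, mul_zero]

/-- For `M = N + 1`, a modulated harmonic tight frame `ψ_k = γ(-1)^k φ_k` (with fixed sign
`γ = ±1`; here `htf N M k = φ_{k+1}`, so `ψ_{k+1} = γ(-1)^{k+1} htf N M k`) is a zero-sum
frame: each column of its analysis frame operator sums to zero. -/
theorem stmt2 {N : ℕ} (hN : 1 ≤ N) (M : ℕ) (hM : M = N + 1)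
    (γ : ℝ) (hγ : γ = 1 ∨ γ = -1) :
    ∀ i : Fin N, ∑ k : Fin M, γ * (-1 : ℝ) ^ ((k : ℕ) + 1) * htf N M k i = 0 := by
  subst hM
  exact stmt2_general N.le_succ (by grind) γ
end

section
/- Let F ∈ ℝ^{M×N} be a frame analysis operator and R ∈ ℝ^{N×M}. Suppose A = FR = aI_M + J for some a ≥ 0 and some column-constant matrix J ∈ 𝒥. Then for every composition m of M, every Variant I initial codeword ŷ_init compatible with m, and every x ∈ ℝ^N with Variant I FPQ encoding P (a permutation matrix such that PFx is m-descending), the linear reconstruction x̂ = R P^{−1} ŷ_init is consistent; that is, D(m) P F x̂ ≥ 0 elementwise. -/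
/-- A matrix is *column-constant* when each of its columns is a constant vector. -/
def ColConst {M : ℕ} (J : Matrix (Fin M) (Fin M) ℝ) : Prop :=
  ∀ i i' j, J i j = J i' j

/-- `D(m) z ≥ 0` elementwise: for every pair of consecutive blocks of the composition `m`,
every entry of `z` in the earlier block dominates every entry in the later block
(i.e. `z` is `m`-descending). -/
def DescIneq {M : ℕ} (c : Composition M) (z : Fin M → ℝ) : Prop :=
  ∀ k ℓ : Fin M, (c.index k : ℕ) + 1 = (c.index ℓ : ℕ) → z ℓ ≤ z k

/-- A Variant I initial codeword compatible with the composition `m`: constant on each block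
of `m`, with strictly decreasing values `μ_1 > μ_2 > ⋯ > μ_K` across the blocks. -/
def VarICodeword {M : ℕ} (c : Composition M) (y : Fin M → ℝ) : Prop :=
  (∀ k ℓ : Fin M, c.index k = c.index ℓ → y k = y ℓ) ∧
  (∀ k ℓ : Fin M, (c.index k : ℕ) < (c.index ℓ : ℕ) → y ℓ < y k)

/-!
Left multiplication by a permutation matrix `P` fixes a column-constant `J`, so conjugating
`a I + J` by `P` gives `a I + J P⁻¹`, and `J P⁻¹` is again column-constant. A matrix of this form
rescales a vector by `a ≥ 0` and shifts all its entries by a common amount, which keeps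
`m`-descending vectors `m`-descending.
-/

open Matrix

namespace ColConst

variable {M : ℕ} {J : Matrix (Fin M) (Fin M) ℝ}

theorem mul_right (hJ : ColConst J) (B : Matrix (Fin M) (Fin M) ℝ) : ColConst (J * B) := by
  intro i i' j
  simp only [mul_apply, hJ i i']

theorem permMatrix_mul (hJ : ColConst J) (σ : Equiv.Perm (Fin M)) : σ.permMatrix ℝ * J = J := by
  ext i j
  rw [Equiv.Perm.permMatrix, PEquiv.toMatrix_toPEquiv_mul]
  exact hJ (σ i) i j

theorem permMatrix_conj_smul_one_add (hJ : ColConst J) (a : ℝ) (σ : Equiv.Perm (Fin M)) :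
    σ.permMatrix ℝ * (a • 1 + J) * σ⁻¹.permMatrix ℝ = a • 1 + J * σ⁻¹.permMatrix ℝ := by
  have hσ : σ.permMatrix ℝ * σ⁻¹.permMatrix ℝ = 1 := by
    rw [← Matrix.permMatrix_mul, inv_mul_cancel, permMatrix_one]
  rw [mul_add, add_mul, hJ.permMatrix_mul, mul_smul_comm, mul_one, smul_mul_assoc, hσ]

theorem mulVec_apply_eq (hJ : ColConst J) (v : Fin M → ℝ) (i i' : Fin M) :
    (J *ᵥ v) i = (J *ᵥ v) i' := by
  simp only [mulVec, dotProduct, hJ i i']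

end ColConst

theorem VarICodeword.descIneq {M : ℕ} {c : Composition M} {y : Fin M → ℝ}
    (hy : VarICodeword c y) : DescIneq c y :=
  fun k ℓ hkℓ ↦ (hy.2 k ℓ (by omega)).le

theorem DescIneq.smul_one_add_mulVec {M : ℕ} {c : Composition M} {z : Fin M → ℝ} {a : ℝ}
    {J : Matrix (Fin M) (Fin M) ℝ} (hz : DescIneq c z) (ha : 0 ≤ a) (hJ : ColConst J) :
    DescIneq c ((a • (1 : Matrix (Fin M) (Fin M) ℝ) + J) *ᵥ z) := by
  intro k ℓ hkℓ
  simp only [add_mulVec, smul_mulVec, one_mulVec, Pi.add_apply, Pi.smul_apply, smul_eq_mul]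
  rw [hJ.mulVec_apply_eq z ℓ k]
  gcongr
  exact hz k ℓ hkℓ

theorem stmt3_general {M : ℕ} {n : Type*} [Fintype n] {F : Matrix (Fin M) n ℝ}
    {R : Matrix n (Fin M) ℝ} {a : ℝ} (ha : 0 ≤ a) {J : Matrix (Fin M) (Fin M) ℝ}
    (hJ : ColConst J) (hA : F * R = a • (1 : Matrix (Fin M) (Fin M) ℝ) + J)
    {c : Composition M} {y : Fin M → ℝ} (hy : DescIneq c y) (σ : Equiv.Perm (Fin M)) :
    DescIneq c (σ.permMatrix ℝ *ᵥ (F *ᵥ (R *ᵥ (σ⁻¹.permMatrix ℝ *ᵥ y)))) := by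
  have reconstruction_eq : σ.permMatrix ℝ *ᵥ (F *ᵥ (R *ᵥ (σ⁻¹.permMatrix ℝ *ᵥ y))) =
      (a • 1 + J * σ⁻¹.permMatrix ℝ) *ᵥ y := by
    rw [← hJ.permMatrix_conj_smul_one_add, ← hA]
    simp only [mulVec_mulVec, Matrix.mul_assoc]
  rw [reconstruction_eq]
  exact hy.smul_one_add_mulVec ha (hJ.mul_right _)

open Matrix in
/-- If `A = FR = aI_M + J` with `a ≥ 0` and `J` column-constant, then for every composition `m`
of `M`, every Variant I initial codeword compatible with `m`, and every `x` with Variant I FPQ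
encoding `P` (a permutation matrix such that `PFx` is `m`-descending), the linear reconstruction
`x̂ = R P⁻¹ ŷ_init` is consistent: `D(m) P F x̂ ≥ 0` elementwise. -/
theorem stmt3 {M N : ℕ} (F : Matrix (Fin M) (Fin N) ℝ) (R : Matrix (Fin N) (Fin M) ℝ)
    (hF : F.rank = N) (a : ℝ) (ha : 0 ≤ a) (J : Matrix (Fin M) (Fin M) ℝ) (hJ : ColConst J)
    (hA : F * R = a • (1 : Matrix (Fin M) (Fin M) ℝ) + J)
    (c : Composition M) (y : Fin M → ℝ) (hy : VarICodeword c y)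
    (x : Fin N → ℝ) (σ : Equiv.Perm (Fin M))
    (henc : DescIneq c ((σ.permMatrix ℝ) *ᵥ (F *ᵥ x))) :
    DescIneq c ((σ.permMatrix ℝ) *ᵥ (F *ᵥ (R *ᵥ (((σ⁻¹).permMatrix ℝ) *ᵥ y)))) :=
  stmt3_general ha hJ hA hy.descIneq σ
end

section
/- Let M ≥ 3, F ∈ ℝ^{M×N}, R ∈ ℝ^{N×M}, and A = FR. Suppose that for every composition m of M, every Variant I initial codeword ŷ_init compatible with m, and every permutation matrix P arising as a Variant I FPQ encoding, the linear reconstruction x̂ = R P^{−1} ŷ_init is consistent, i.e., the inequality D(m) P A P^{−1} ŷ_init ≥ 0 holds elementwise for every composition m, every Variant I initial codeword ŷ_init compatible with m, and every permutation matrix P. Then A must be of the form A = aI_M + J with a ≥ 0 and J a column-constant matrix. -/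
/-!
For the composition `(1, ..., 1)` the hypothesis says that `A` never reverses the order of two
entries of a vector `x` with distinct entries: sort `x` by a permutation and read off the
inequality. Any `x` with `x i ≤ x j`, `i ≠ j`, is a limit of vectors with distinct entries and
`x i < x j`, so `x i ≤ x j` implies `(A x) i ≤ (A x) j` for *every* `x`. Testing this on `e_k`
shows that the off-diagonal entries of each column agree and are at most the diagonal one; testing
it on `e_i + e_j` shows that the excess of the diagonal entry is the same in every column.
-/

open Matrix Filter Topology Function

/-- The matrix `A` preserves the weak order between any two entries of a vector. In particular it
maps equal entries to equal entries, which `Monovary (A *ᵥ x) x` alone would not give. -/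
def PreservesEntryOrder {ι R : Type*} [Fintype ι] [NonUnitalNonAssocSemiring R] [LE R]
    (A : Matrix ι ι R) : Prop :=
  ∀ (x : ι → R) (i j : ι), x i ≤ x j → (A *ᵥ x) i ≤ (A *ᵥ x) j

namespace PreservesEntryOrder

variable {ι R : Type*} [Fintype ι] {A : Matrix ι ι R}

theorem mulVec_apply_eq [NonUnitalNonAssocSemiring R] [PartialOrder R]
    (hA : PreservesEntryOrder A) {x : ι → R} {i j : ι} (hx : x i = x j) :
    (A *ᵥ x) i = (A *ᵥ x) j :=
  le_antisymm (hA x i j hx.le) (hA x j i hx.ge)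

theorem apply_eq_of_ne [NonAssocSemiring R] [PartialOrder R]
    (hA : PreservesEntryOrder A) {i j k : ι} (hik : i ≠ k) (hjk : j ≠ k) : A i k = A j k := by
  classical
  simpa using hA.mulVec_apply_eq (x := Pi.single k 1) (i := i) (j := j) (by simp [hik, hjk])

theorem apply_le_diag [NonAssocSemiring R] [PartialOrder R] [ZeroLEOneClass R]
    (hA : PreservesEntryOrder A) (i k : ι) : A i k ≤ A k k := by
  classical
  obtain rfl | hik := eq_or_ne i k
  · rfl
  · simpa using hA (Pi.single k 1) i k (by simp [hik])

variable [Ring R] [PartialOrder R]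

theorem diag_sub_apply_comm (hA : PreservesEntryOrder A) {i j : ι} (hij : i ≠ j) :
    A i i - A j i = A j j - A i j := by
  classical
  have hsum : A i i + A i j = A j i + A j j := by
    have himage := hA.mulVec_apply_eq (x := Pi.single i 1 + Pi.single j 1)
      (i := i) (j := j) (by simp [hij, hij.symm])
    rw [mulVec_add] at himage
    simpa using himage
  rw [sub_eq_sub_iff_add_eq_add, hsum, add_comm]

theorem diag_sub_apply_eq (hA : PreservesEntryOrder A) {i i' j j' : ι} (hi : i' ≠ i)
    (hj : j' ≠ j) : A i i - A i' i = A j j - A j' j := by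
  obtain rfl | hij := eq_or_ne i j
  · rw [hA.apply_eq_of_ne hi hj]
  · calc
      A i i - A i' i = A i i - A j i := by rw [hA.apply_eq_of_ne hi hij.symm]
      _ = A j j - A i j := hA.diag_sub_apply_comm hij
      _ = A j j - A j' j := by rw [hA.apply_eq_of_ne hij hj]

theorem sub_smul_one_apply_eq [DecidableEq ι] (hA : PreservesEntryOrder A) {p q : ι}
    (hqp : q ≠ p) (i i' j : ι) :
    (A - (A p p - A q p) • (1 : Matrix ι ι R)) i j =
      (A - (A p p - A q p) • (1 : Matrix ι ι R)) i' j := by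
  have diag_eq {k : ι} (hk : k ≠ j) : A j j - (A p p - A q p) = A k j := by
    rw [← hA.diag_sub_apply_eq hk hqp, sub_sub_cancel]
  obtain rfl | hi := eq_or_ne j i <;> obtain rfl | hi' := eq_or_ne j i'
  · rfl
  · simpa [hi'.symm] using diag_eq hi'.symm
  · simpa [hi.symm] using (diag_eq hi.symm).symm
  · simpa [hi.symm, hi'.symm] using hA.apply_eq_of_ne hi.symm hi'.symm

theorem exists_nonneg_sub_smul_one_apply_eq [DecidableEq ι] [IsOrderedAddMonoid R]
    [ZeroLEOneClass R] (hA : PreservesEntryOrder A) :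
    ∃ a : R, 0 ≤ a ∧ ∀ i i' j,
      (A - a • (1 : Matrix ι ι R)) i j = (A - a • (1 : Matrix ι ι R)) i' j := by
  obtain hι | ⟨q, p, hqp⟩ := subsingleton_or_nontrivial ι
  · exact ⟨0, le_rfl, fun i i' j => by rw [Subsingleton.elim i i']⟩
  · exact ⟨A p p - A q p, sub_nonneg.2 (hA.apply_le_diag q p), hA.sub_smul_one_apply_eq hqp⟩

end PreservesEntryOrder

section Perturbation

variable {ι 𝕜 : Type*} [Field 𝕜]

theorem eventually_cofinite_injective_add_smul [Finite ι] (x : ι → 𝕜) {u : ι → 𝕜}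
    (hu : Injective u) : ∀ᶠ ε : 𝕜 in cofinite, Injective (x + ε • u) := by
  refine eventually_all.2 fun k => eventually_all.2 fun l => ?_
  obtain rfl | hkl := eq_or_ne k l
  · exact Eventually.of_forall fun _ _ => rfl
  · have hukl : u k - u l ≠ 0 := sub_ne_zero.2 (hu.ne hkl)
    filter_upwards [(Set.finite_singleton ((x l - x k) / (u k - u l))).compl_mem_cofinite]
      with ε hε heq
    refine absurd ((eq_div_iff hukl).2 ?_) hε
    simp only [Pi.add_apply, Pi.smul_apply, smul_eq_mul] at heq
    linear_combination heq

variable [LinearOrder 𝕜] [IsStrictOrderedRing 𝕜]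

theorem exists_injective_lt [Countable ι] {i j : ι} (hij : i ≠ j) :
    ∃ u : ι → 𝕜, Injective u ∧ u i < u j := by
  obtain ⟨e, he⟩ := exists_injective_nat ι
  have hcast : Injective fun k => (e k : 𝕜) := Nat.cast_injective.comp he
  obtain hlt | hgt := (hcast.ne hij).lt_or_gt
  · exact ⟨_, hcast, hlt⟩
  · exact ⟨_, neg_injective.comp hcast, neg_lt_neg hgt⟩

theorem preservesEntryOrder_of_monovary_of_injective [Fintype ι] [TopologicalSpace 𝕜]
    [OrderTopology 𝕜] {A : Matrix ι ι 𝕜}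
    (hA : ∀ x : ι → 𝕜, Injective x → Monovary (A *ᵥ x) x) : PreservesEntryOrder A := by
  intro x i j hx
  obtain rfl | hij := eq_or_ne i j
  · rfl
  obtain ⟨u, hu, huij⟩ := exists_injective_lt (𝕜 := 𝕜) hij
  have tendsto_perturbed (k : ι) :
      Tendsto (fun ε : 𝕜 => (A *ᵥ (x + ε • u)) k) (𝓝[>] 0) (𝓝 ((A *ᵥ x) k)) := by
    have hcont : Continuous fun ε : 𝕜 => (A *ᵥ (x + ε • u)) k := by fun_prop
    simpa using (hcont.tendsto 0).mono_left nhdsWithin_le_nhds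
  have injective_perturbed : ∀ᶠ ε in 𝓝[>] (0 : 𝕜), Injective (x + ε • u) :=
    (nhdsGT_le_nhdsNE 0).trans (nhdsNE_le_cofinite 0)
      (eventually_cofinite_injective_add_smul x hu)
  refine le_of_tendsto_of_tendsto (tendsto_perturbed i) (tendsto_perturbed j) ?_
  filter_upwards [injective_perturbed, self_mem_nhdsWithin] with ε hinj hε
  exact hA _ hinj (add_lt_add_of_le_of_lt hx (mul_lt_mul_of_pos_left huij hε))

end Perturbation

section FinestComposition

variable {M : ℕ}

theorem coe_index_ones (k : Fin M) : ((Composition.ones M).index k : ℕ) = k := by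
  have hle := (Composition.ones M).sizeUpTo_index_le k
  have hlt := (Composition.ones M).lt_sizeUpTo_index_succ k
  simp only [Composition.ones_sizeUpTo, Fin.val_succ] at hle hlt
  omega

theorem varICodeword_ones_iff {y : Fin M → ℝ} :
    VarICodeword (Composition.ones M) y ↔ StrictAnti y := by
  simp only [VarICodeword, Fin.ext_iff, coe_index_ones]
  exact ⟨fun hy k l hkl => hy.2 k l hkl,
    fun hy => ⟨fun k l hkl => congrArg y (Fin.ext hkl), fun k l hkl => hy hkl⟩⟩

theorem descIneq_ones_iff {z : Fin M → ℝ} :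
    DescIneq (Composition.ones M) z ↔ Antitone z := by
  simp only [DescIneq, coe_index_ones, antitone_iff_forall_covBy, Fin.covBy_iff,
    Order.covBy_iff_add_one_eq]

theorem exists_perm_strictAnti_comp {n : ℕ} {α : Type*} [LinearOrder α] {x : Fin n → α}
    (hx : Injective x) : ∃ σ : Equiv.Perm (Fin n), StrictAnti (x ∘ σ) :=
  ⟨Tuple.sort (OrderDual.toDual ∘ x),
    (show Antitone (x ∘ _) from Tuple.monotone_sort (OrderDual.toDual ∘ x)).strictAnti_of_injective
      (hx.comp (Equiv.injective _))⟩

theorem monovary_mulVec_of_descIneq_ones {A : Matrix (Fin M) (Fin M) ℝ}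
    (hA : ∀ y : Fin M → ℝ, VarICodeword (Composition.ones M) y → ∀ σ : Equiv.Perm (Fin M),
      DescIneq (Composition.ones M) (σ.permMatrix ℝ *ᵥ (A *ᵥ ((σ⁻¹).permMatrix ℝ *ᵥ y))))
    {x : Fin M → ℝ} (hx : Injective x) : Monovary (A *ᵥ x) x := by
  obtain ⟨σ, hσ⟩ := exists_perm_strictAnti_comp hx
  have unsort (v : Fin M → ℝ) : (v ∘ σ) ∘ ⇑σ⁻¹ = v := by ext; simp
  have hdesc : Antitone ((A *ᵥ x) ∘ σ) := by
    simpa only [permMatrix_mulVec, unsort, descIneq_ones_iff]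
      using hA (x ∘ σ) (varICodeword_ones_iff.2 hσ) σ
  simpa only [unsort] using (hdesc.monovary hσ.antitone).comp_right ⇑σ⁻¹

end FinestComposition

theorem stmt4_general {M : ℕ} (A : Matrix (Fin M) (Fin M) ℝ)
    (h : ∀ y : Fin M → ℝ, VarICodeword (Composition.ones M) y → ∀ σ : Equiv.Perm (Fin M),
      DescIneq (Composition.ones M) (σ.permMatrix ℝ *ᵥ (A *ᵥ ((σ⁻¹).permMatrix ℝ *ᵥ y)))) :
    ∃ (a : ℝ) (J : Matrix (Fin M) (Fin M) ℝ), 0 ≤ a ∧ ColConst J ∧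
      A = a • (1 : Matrix (Fin M) (Fin M) ℝ) + J := by
  have hA : PreservesEntryOrder A :=
    preservesEntryOrder_of_monovary_of_injective fun _ => monovary_mulVec_of_descIneq_ones h
  obtain ⟨a, ha, hconst⟩ := hA.exists_nonneg_sub_smul_one_apply_eq
  exact ⟨a, A - a • 1, ha, hconst, (add_sub_cancel _ _).symm⟩

open Matrix in
/-- If `M ≥ 3` and the consistency inequality `D(m) P A P⁻¹ ŷ_init ≥ 0` holds for every
composition `m` of `M`, every Variant I initial codeword `ŷ_init` compatible with `m`, and every
permutation matrix `P`, then `A = FR` must be of the form `aI_M + J` with `a ≥ 0` and `J`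
column-constant. -/
theorem stmt4 {M N : ℕ} (hM : 3 ≤ M)
    (F : Matrix (Fin M) (Fin N) ℝ) (R : Matrix (Fin N) (Fin M) ℝ)
    (h : ∀ (c : Composition M) (y : Fin M → ℝ), VarICodeword c y →
      ∀ σ : Equiv.Perm (Fin M),
        DescIneq c ((σ.permMatrix ℝ) *ᵥ ((F * R) *ᵥ (((σ⁻¹).permMatrix ℝ) *ᵥ y)))) :
    ∃ (a : ℝ) (J : Matrix (Fin M) (Fin M) ℝ), 0 ≤ a ∧ ColConst J ∧
      F * R = a • (1 : Matrix (Fin M) (Fin M) ℝ) + J :=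
  stmt4_general (F * R) (h (Composition.ones M))
end

section
/- Let M = N and suppose A = FR = aI_M for some a ≥ 0, where F ∈ ℝ^{M×N} is a frame analysis operator and R ∈ ℝ^{N×M}. Then for every composition m of M, every Variant II initial codeword ŷ_init compatible with m, and every x ∈ ℝ^N with Variant II FPQ encoding (P,V), the linear reconstruction x̂ = R P^{−1} V^{−1} ŷ_init is consistent; that is, D̃(m) V P F x̂ ≥ 0 elementwise. -/
/-- A Variant II initial codeword compatible with the composition `m`: constant on blocks,
strictly decreasing across blocks, with all values nonnegative (`μ_1 > ⋯ > μ_K ≥ 0`). -/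
def VarIICodeword {M : ℕ} (c : Composition M) (y : Fin M → ℝ) : Prop :=
  (∀ k ℓ : Fin M, c.index k = c.index ℓ → y k = y ℓ) ∧
  (∀ k ℓ : Fin M, (c.index k : ℕ) < (c.index ℓ : ℕ) → y ℓ < y k) ∧
  (∀ k : Fin M, 0 ≤ y k)

/-- `D̃(m) z ≥ 0` elementwise: `D(m) z ≥ 0` together with nonnegativity of the entries of `z`
indexed by the second-to-last block `I_{K-1}` of the composition `m`. -/
def VarIIIneq {M : ℕ} (c : Composition M) (z : Fin M → ℝ) : Prop :=
  DescIneq c z ∧ ∀ k : Fin M, (c.index k : ℕ) + 2 = c.length → 0 ≤ z k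

/-!
Conjugating `F R = a I` by the invertible matrix `V P` gives `V P F R P⁻¹ V⁻¹ = a I`, so that
`V P F x̂ = a ŷ_init`. The vectors `z` with `D̃(m) z ≥ 0` form a cone, which contains every
codeword.
-/

section ScaledInverses

open Matrix

theorem mul_mul_mul_eq_smul_one {l m n α : Type*} [Fintype m] [Fintype n] [DecidableEq l]
    [DecidableEq m] [CommSemiring α] {F : Matrix m n α} {R : Matrix n m α} {a : α}
    {W : Matrix l m α} {W' : Matrix m l α} (hFR : F * R = a • (1 : Matrix m m α))
    (hW : W * W' = 1) : W * F * (R * W') = a • (1 : Matrix l l α) :=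
  calc W * F * (R * W') = W * (F * R) * W' := by simp only [Matrix.mul_assoc]
    _ = a • (W * W') := by rw [hFR, Matrix.mul_smul, Matrix.mul_one, Matrix.smul_mul]
    _ = a • 1 := by rw [hW]

theorem permMatrix_mul_permMatrix_inv {n α : Type*} [Fintype n] [DecidableEq n]
    [NonAssocSemiring α] (σ : Equiv.Perm n) : σ.permMatrix α * (σ⁻¹).permMatrix α = 1 := by
  rw [← permMatrix_mul, inv_mul_cancel, permMatrix_one]

theorem diagonal_mul_inv_of_ne_zero {n K : Type*} [Fintype n] [DecidableEq n] [Field K]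
    {ε : n → K} (hε : ∀ k, ε k ≠ 0) : diagonal ε * (diagonal ε)⁻¹ = 1 := by
  refine mul_nonsing_inv _ ?_
  rw [det_diagonal, isUnit_iff_ne_zero]
  exact Finset.prod_ne_zero_iff.mpr fun k _ => hε k

theorem diagonal_permMatrix_mulVec_reconstruction {m n K : Type*} [Fintype m] [Fintype n]
    [DecidableEq m] [Field K] {F : Matrix m n K} {R : Matrix n m K} {a : K}
    (hFR : F * R = a • (1 : Matrix m m K)) (σ : Equiv.Perm m) {ε : m → K}
    (hε : ∀ k, ε k ≠ 0) (y : m → K) :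
    diagonal ε *ᵥ (σ.permMatrix K *ᵥ
      (F *ᵥ (R *ᵥ ((σ⁻¹).permMatrix K *ᵥ ((diagonal ε)⁻¹ *ᵥ y))))) = a • y := by
  have hP := mul_mul_mul_eq_smul_one hFR (permMatrix_mul_permMatrix_inv σ)
  have hVP := mul_mul_mul_eq_smul_one hP (diagonal_mul_inv_of_ne_zero hε)
  simpa only [mulVec_mulVec, Matrix.mul_assoc, smul_mulVec, one_mulVec] using
    congrArg (· *ᵥ y) hVP

end ScaledInverses

section Consistency

variable {M : ℕ} {c : Composition M} {y z : Fin M → ℝ} {a : ℝ}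

theorem DescIneq.smul (hz : DescIneq c z) (ha : 0 ≤ a) : DescIneq c (a • z) :=
  fun k ℓ hkℓ => mul_le_mul_of_nonneg_left (hz k ℓ hkℓ) ha

theorem VarIIIneq.smul (hz : VarIIIneq c z) (ha : 0 ≤ a) : VarIIIneq c (a • z) :=
  ⟨hz.1.smul ha, fun k hk => mul_nonneg ha (hz.2 k hk)⟩

theorem VarIICodeword.descIneq (hy : VarIICodeword c y) : DescIneq c y :=
  fun k ℓ hkℓ => (hy.2.1 k ℓ (Nat.lt_of_succ_le hkℓ.le)).le

theorem VarIICodeword.varIIIneq (hy : VarIICodeword c y) : VarIIIneq c y :=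
  ⟨hy.descIneq, fun k _ => hy.2.2 k⟩

open Matrix in
theorem stmt5_general {ι : Type*} [Fintype ι] {F : Matrix (Fin M) ι ℝ} {R : Matrix ι (Fin M) ℝ}
    (hFR : F * R = a • (1 : Matrix (Fin M) (Fin M) ℝ)) (ha : 0 ≤ a) (σ : Equiv.Perm (Fin M))
    {ε : Fin M → ℝ} (hε : ∀ k, ε k ≠ 0) (hy : VarIIIneq c y) :
    VarIIIneq c (diagonal ε *ᵥ (σ.permMatrix ℝ *ᵥ
      (F *ᵥ (R *ᵥ ((σ⁻¹).permMatrix ℝ *ᵥ ((diagonal ε)⁻¹ *ᵥ y)))))) := by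
  rw [diagonal_permMatrix_mulVec_reconstruction hFR σ hε]
  exact hy.smul ha

end Consistency

open Matrix in
/-- If `M = N` and `A = FR = aI_M` with `a ≥ 0`, then for every composition `m` of `M`, every
Variant II initial codeword compatible with `m`, and every `x` with Variant II FPQ encoding
`(P, V)` — `V = diag(ε)` a sign-changing matrix equal to `+1` on the last block, `|VPFx|`
`m`-descending and the first `M - m_K` entries of `VPFx` nonnegative — the linear reconstruction
`x̂ = R P⁻¹ V⁻¹ ŷ_init` is consistent: `D̃(m) V P F x̂ ≥ 0` elementwise. -/
theorem stmt5 {M N : ℕ} (hMN : M = N)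
    (F : Matrix (Fin M) (Fin N) ℝ) (hF : F.rank = N) (R : Matrix (Fin N) (Fin M) ℝ)
    (a : ℝ) (ha : 0 ≤ a) (hA : F * R = a • (1 : Matrix (Fin M) (Fin M) ℝ))
    (c : Composition M) (y : Fin M → ℝ) (hy : VarIICodeword c y)
    (x : Fin N → ℝ) (σ : Equiv.Perm (Fin M)) (ε : Fin M → ℝ)
    (hsign : ∀ k, ε k = 1 ∨ ε k = -1)
    (hlast : ∀ k : Fin M, (c.index k : ℕ) + 1 = c.length → ε k = 1)
    (henc1 : DescIneq c (fun k => |(Matrix.diagonal ε *ᵥ ((σ.permMatrix ℝ) *ᵥ (F *ᵥ x))) k|))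
    (henc2 : ∀ k : Fin M, (c.index k : ℕ) + 1 < c.length →
      0 ≤ (Matrix.diagonal ε *ᵥ ((σ.permMatrix ℝ) *ᵥ (F *ᵥ x))) k) :
    VarIIIneq c (Matrix.diagonal ε *ᵥ ((σ.permMatrix ℝ) *ᵥ
      (F *ᵥ (R *ᵥ (((σ⁻¹).permMatrix ℝ) *ᵥ ((Matrix.diagonal ε)⁻¹ *ᵥ y)))))) := by
  exact stmt5_general hA ha σ (fun k => by rcases hsign k with h | h <;> simp [h]) hy.varIIIneq
end

section
/- Let M ≥ 3 and let A = diag(a_1, a_2, ..., a_M) be a diagonal M×M real matrix. If the inequality D(m) O A O^{−1} ŷ_init ≥ 0 (elementwise) holds for every composition m of M, every Variant II initial codeword ŷ_init compatible with m, and every permutation matrix O, then A = aI_M for some a ≥ 0; that is, all diagonal entries of A are equal and nonnegative. -/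
/-!
Conjugating `diagonal d` by a permutation matrix permutes `d`, so the hypothesis says
`d (σ ℓ) * y ℓ ≤ d (σ k) * y k` whenever the block of `ℓ` follows that of `k`. Take the geometric
codeword with value `q ^ b` on the `b`-th block, counted from zero, where `0 < q < 1`. Choosing `k`
and `ℓ` in the first two blocks and `σ` sending them to arbitrary distinct `i` and `j` gives
`q * d j ≤ d i`. Letting `q → 1` yields `d j ≤ d i`, hence equality by symmetry, and letting
`q → 0` yields `0 ≤ d i`.
-/

section Matrix

variable {n R : Type*} [Fintype n] [DecidableEq n] [NonAssocSemiring R]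

theorem permMatrix_mul_diagonal_mul_permMatrix_inv (σ : Equiv.Perm n) (d : n → R) :
    σ.permMatrix R * Matrix.diagonal d * (σ⁻¹).permMatrix R = Matrix.diagonal (d ∘ σ) := by
  rw [Equiv.Perm.permMatrix, Equiv.Perm.permMatrix, PEquiv.toMatrix_toPEquiv_mul,
    PEquiv.mul_toMatrix_toPEquiv, Matrix.submatrix_submatrix]
  exact Matrix.submatrix_diagonal_equiv d σ

end Matrix

section Order

open Set

variable {ι K : Type*} [Field K] [LinearOrder K] [IsStrictOrderedRing K] [TopologicalSpace K]
  [OrderTopology K]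

theorem mul_le_on_Icc_of_mul_le_on_Ioo {x y : K} (h : ∀ q ∈ Ioo (0 : K) 1, q * y ≤ x) :
    ∀ q ∈ Icc (0 : K) 1, q * y ≤ x := by
  rw [← closure_Ioo zero_ne_one]
  exact fun q hq ↦ le_on_closure h (by fun_prop) continuousOn_const hq

theorem exists_nonneg_forall_eq_of_mul_le [Nontrivial ι] {d : ι → K}
    (h : ∀ i j, i ≠ j → ∀ q ∈ Ioo (0 : K) 1, q * d j ≤ d i) :
    ∃ a, 0 ≤ a ∧ ∀ i, d i = a := by
  have d_le {i j : ι} (hij : i ≠ j) : d j ≤ d i := by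
    simpa using mul_le_on_Icc_of_mul_le_on_Ioo (h i j hij) 1 (right_mem_Icc.2 zero_le_one)
  obtain ⟨i₀, j₀, hne⟩ := exists_pair_ne ι
  refine ⟨d i₀, ?_, fun i ↦ ?_⟩
  · simpa using mul_le_on_Icc_of_mul_le_on_Ioo (h i₀ j₀ hne) 0 (left_mem_Icc.2 zero_le_one)
  · rcases eq_or_ne i i₀ with rfl | hi
    · rfl
    · exact le_antisymm (d_le hi.symm) (d_le hi)

end Order

section Composition

open Matrix

variable {M : ℕ} (c : Composition M)

theorem composition_index_surjective : Function.Surjective c.index := fun i ↦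
  ⟨c.embedding i ⟨0, c.blocks_pos' i i.2⟩, c.index_embedding i _⟩

theorem varIICodeword_comp_index {μ : Fin c.length → ℝ} (hμ : StrictAnti μ) (hμ₀ : ∀ i, 0 ≤ μ i) :
    VarIICodeword c (μ ∘ c.index) :=
  ⟨fun _ _ hkl ↦ congrArg μ hkl, fun _ _ hkl ↦ hμ hkl, fun k ↦ hμ₀ (c.index k)⟩

theorem varIICodeword_pow_index {q : ℝ} (hq₀ : 0 < q) (hq₁ : q < 1) :
    VarIICodeword c fun k ↦ q ^ (c.index k : ℕ) :=
  varIICodeword_comp_index c (μ := fun i ↦ q ^ (i : ℕ))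
    (fun _ _ hij ↦ pow_right_strictAnti₀ hq₀ hq₁ hij) fun _ ↦ by positivity

variable {c}

theorem mul_le_of_descIneq_diagonal_pow_index (hc : 2 ≤ c.length) {d : Fin M → ℝ} {q : ℝ}
    (h : ∀ σ : Equiv.Perm (Fin M),
      DescIneq c (Matrix.diagonal (d ∘ σ) *ᵥ fun k ↦ q ^ (c.index k : ℕ)))
    {i j : Fin M} (hij : i ≠ j) : q * d j ≤ d i := by
  obtain ⟨k, hk⟩ := composition_index_surjective c ⟨0, by lia⟩
  obtain ⟨ℓ, hℓ⟩ := composition_index_surjective c ⟨1, by lia⟩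
  have hkℓ : k ≠ ℓ := by
    rintro rfl
    simp [hk] at hℓ
  obtain ⟨σ, hσk, hσℓ⟩ : ∃ σ : Equiv.Perm (Fin M), σ k = i ∧ σ ℓ = j :=
    MulAction.is_two_pretransitive_iff.mp (Equiv.Perm.isMultiplyPretransitive (Fin M) 2) hkℓ hij
  have hz := h σ k ℓ (by simp [hk, hℓ])
  simpa [Matrix.mulVec_diagonal, hk, hℓ, hσk, hσℓ, mul_comm] using hz

theorem stmt17_general (hc : 2 ≤ c.length) (d : Fin M → ℝ)
    (h : ∀ y : Fin M → ℝ, VarIICodeword c y → ∀ σ : Equiv.Perm (Fin M),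
      DescIneq c ((σ.permMatrix ℝ * Matrix.diagonal d * (σ⁻¹).permMatrix ℝ) *ᵥ y)) :
    ∃ a : ℝ, 0 ≤ a ∧ Matrix.diagonal d = a • (1 : Matrix (Fin M) (Fin M) ℝ) := by
  simp only [permMatrix_mul_diagonal_mul_permMatrix_inv] at h
  have : Nontrivial (Fin M) := Fin.nontrivial_iff_two_le.2 (hc.trans c.length_le)
  obtain ⟨a, ha, hda⟩ := exists_nonneg_forall_eq_of_mul_le fun i j hij q hq ↦
    mul_le_of_descIneq_diagonal_pow_index hc (h _ (varIICodeword_pow_index c hq.1 hq.2)) hij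
  exact ⟨a, ha, by rw [funext hda, Matrix.smul_one_eq_diagonal]⟩

end Composition

open Matrix in
/-- If `M ≥ 3`, `A = diag(a_1, …, a_M)` is diagonal, and `D(m) O A O⁻¹ ŷ_init ≥ 0` holds for
every composition `m` of `M`, every Variant II initial codeword `ŷ_init` compatible with `m`
and every permutation matrix `O`, then `A = aI_M` for some `a ≥ 0`. -/
theorem stmt17 {M : ℕ} (hM : 3 ≤ M) (d : Fin M → ℝ)
    (h : ∀ (c : Composition M) (y : Fin M → ℝ), VarIICodeword c y →
      ∀ σ : Equiv.Perm (Fin M),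
        DescIneq c (((σ.permMatrix ℝ) * Matrix.diagonal d * ((σ⁻¹).permMatrix ℝ)) *ᵥ y)) :
    ∃ a : ℝ, 0 ≤ a ∧ Matrix.diagonal d = a • (1 : Matrix (Fin M) (Fin M) ℝ) := by
  exact stmt17_general (c := .ones M) (by rw [Composition.ones_length]; lia) d (h (.ones M))
end
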